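/- Under Assumption 1, fix i ∈ [m] and j ∈ {2,…,n}, and let 𝒫_j = { X_{l,τ} : l ∈ [m], 1 ≤ τ ≤ j−1 } be the set of all variables strictly before time j. Among all subsets S ⊆ 𝒫_j such that X_{i,j} is conditionally independent of the tuple of variables 𝒫_j ∖ S given the tuple of variables in S, there is a unique one of minimum cardinality, and this minimal subset is contained in { X_{l,τ} : l ∈ A(i) ∪ {i}, 1 ≤ τ ≤ j−1 }, where A(i) is the causal Markov boundary of X_i. (This is the content of the claim that fully reducing each term of the minimal generative model factorization yields the unique Bayesian network of variable dependencies consistent with the causal time ordering.) -/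

import Mathlib

open Finset

/-- Probability of an event under the probability mass function `p` on a finite space. -/
noncomputable def pr {Ω : Type} [Fintype Ω] (p : Ω → ℝ) (E : Set Ω) : ℝ :=
  ∑ ω : Ω, E.indicator p ω

/-- Shannon conditional mutual information `I(A ; B | C)` of finite-valued random variables
on a finite probability space with pmf `p` (terms with vanishing probability contribute `0`,
by the conventions `Real.log 0 = 0`, `x / 0 = 0`). -/
noncomputable def cmi {Ω α β γ : Type} [Fintype Ω] [Fintype α] [Fintype β] [Fintype γ]
    (p : Ω → ℝ) (A : Ω → α) (B : Ω → β) (C : Ω → γ) : ℝ :=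
  ∑ a : α, ∑ b : β, ∑ c : γ,
    pr p {ω | A ω = a ∧ B ω = b ∧ C ω = c} *
      Real.log (pr p {ω | A ω = a ∧ B ω = b ∧ C ω = c} * pr p {ω | C ω = c} /
        (pr p {ω | A ω = a ∧ C ω = c} * pr p {ω | B ω = b ∧ C ω = c}))

/-- `A` and `B` are conditionally independent given `C` (under the pmf `p`). -/
def CondIndep {Ω α β γ : Type} [Fintype Ω] (p : Ω → ℝ)
    (A : Ω → α) (B : Ω → β) (C : Ω → γ) : Prop :=
  ∀ (a : α) (b : β) (c : γ),
    pr p {ω | A ω = a ∧ B ω = b ∧ C ω = c} * pr p {ω | C ω = c}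
      = pr p {ω | A ω = a ∧ C ω = c} * pr p {ω | B ω = b ∧ C ω = c}

/-- Trajectories of `m` processes over `n` time steps with alphabet `𝒳`:
`ω i j` is the value of process `i` at (0-indexed) time `j`. -/
abbrev Traj (m n : ℕ) (𝒳 : Type) := Fin m → Fin n → 𝒳

/-- The past `X_S^{j-1}`: the values of the processes in `S` at times strictly before `j`;
all other entries are masked by `none`. -/
def past {m n : ℕ} {𝒳 : Type} (S : Finset (Fin m)) (j : Fin n) (ω : Traj m n 𝒳) :
    Fin m → Fin n → Option 𝒳 :=
  fun k t => if k ∈ S ∧ t < j then some (ω k t) else none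

/-- Causally conditioned directed information
`I(X_S → X_i ‖ X_T) := Σ_{j=1}^{n} I(X_S^{j-1} ; X_{i,j} | X_i^{j-1}, X_T^{j-1})`. -/
noncomputable def di {m n : ℕ} {𝒳 : Type} [Fintype 𝒳] [DecidableEq 𝒳]
    (p : Traj m n 𝒳 → ℝ) (S : Finset (Fin m)) (i : Fin m) (T : Finset (Fin m)) : ℝ :=
  ∑ j : Fin n,
    cmi p (past S j) (fun ω => ω i j) (fun ω => (past {i} j ω, past T j ω))

/-- Assumption 1: the joint distribution is strictly positive (and is a pmf), and at each
time `j` the variables `X_{1,j}, …, X_{m,j}` are mutually conditionally independent given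
the full past `X_{[m]}^{j-1}` (stated in the division-free form
`P(joint ∧ past) · P(past)^{m-1} = Π_i P(X_{i,j} = x_i ∧ past)`). -/
def Assumption1 {m n : ℕ} {𝒳 : Type} [Fintype 𝒳] [DecidableEq 𝒳]
    (p : Traj m n 𝒳 → ℝ) : Prop :=
  (∀ ω, 0 < p ω) ∧ (∑ ω : Traj m n 𝒳, p ω = 1) ∧
    ∀ (j : Fin n) (x : Fin m → 𝒳) (h : Fin m → Fin n → Option 𝒳),
      pr p {ω | (∀ i, ω i j = x i) ∧ past Finset.univ j ω = h} *
          pr p {ω | past Finset.univ j ω = h} ^ (m - 1)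
        = ∏ i : Fin m, pr p {ω | ω i j = x i ∧ past Finset.univ j ω = h}

/-- `S ⊆ [m]∖{i}` is a causal Markov blanket of `X_i` if
`I(X_{[m]∖({i}∪S)} → X_i ‖ X_S) = 0`. -/
def IsCausalBlanket {m n : ℕ} {𝒳 : Type} [Fintype 𝒳] [DecidableEq 𝒳]
    (p : Traj m n 𝒳 → ℝ) (i : Fin m) (S : Finset (Fin m)) : Prop :=
  S ⊆ Finset.univ.erase i ∧ di p (Finset.univ.erase i \ S) i S = 0

/-- A causal Markov boundary `A(i)` of `X_i` is a causal Markov blanket of minimum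
cardinality. -/
def IsCausalBoundary {m n : ℕ} {𝒳 : Type} [Fintype 𝒳] [DecidableEq 𝒳]
    (p : Traj m n 𝒳 → ℝ) (i : Fin m) (A : Finset (Fin m)) : Prop :=
  IsCausalBlanket p i A ∧
    ∀ B : Finset (Fin m), IsCausalBlanket p i B → A.card ≤ B.card

/-- The tuple of the variables `X_{k,t}` with `(k,t) ∈ S` (all other entries masked). -/
def varTuple {m n : ℕ} {𝒳 : Type} (S : Finset (Fin m × Fin n)) (ω : Traj m n 𝒳) :
    Fin m → Fin n → Option 𝒳 :=
  fun k t => if (k, t) ∈ S then some (ω k t) else none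

/-- `S` is a set of variables strictly before time `j` such that `X_{i,j}` is conditionally
independent of the remaining variables before time `j` given the tuple of variables in `S`. -/
def GoodSet {m n : ℕ} {𝒳 : Type} [Fintype 𝒳] [DecidableEq 𝒳]
    (p : Traj m n 𝒳 → ℝ) (i : Fin m) (j : Fin n) (S : Finset (Fin m × Fin n)) : Prop :=
  (∀ q ∈ S, q.2 < j) ∧
    cmi p
      (varTuple ((Finset.univ.filter fun q : Fin m × Fin n => q.2 < j) \ S))
      (fun ω => ω i j) (varTuple S) = 0

section FiniteProbability

variable {Ω α β γ : Type} [Fintype Ω] {p : Ω → ℝ}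

theorem pr_nonneg (hp : ∀ ω, 0 < p ω) (E : Set Ω) : 0 ≤ pr p E :=
  Finset.sum_nonneg fun ω _ => Set.indicator_nonneg (fun ω _ => (hp ω).le) ω

theorem pr_mono (hp : ∀ ω, 0 < p ω) {E F : Set Ω} (h : E ⊆ F) : pr p E ≤ pr p F :=
  Finset.sum_le_sum fun ω _ =>
    Set.indicator_le_indicator_of_subset h (fun ω => (hp ω).le) ω

theorem pr_pos (hp : ∀ ω, 0 < p ω) {E : Set Ω} {ω : Ω} (h : ω ∈ E) : 0 < pr p E := by
  refine Finset.sum_pos' (fun ω _ => Set.indicator_nonneg (fun ω _ => (hp ω).le) ω)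
    ⟨ω, Finset.mem_univ ω, ?_⟩
  rw [Set.indicator_of_mem h]
  exact hp ω

theorem pr_eq_zero_of_forall_notMem {E : Set Ω} (h : ∀ ω, ω ∉ E) : pr p E = 0 :=
  Finset.sum_eq_zero fun ω _ => Set.indicator_of_notMem (h ω) p

/-- Marginalization: summing out the values of a finite-valued random variable. -/
theorem sum_pr_and [Fintype α] (A : Ω → α) (Q : Ω → Prop) :
    ∑ a, pr p {ω | A ω = a ∧ Q ω} = pr p {ω | Q ω} := by
  classical
  unfold pr
  rw [Finset.sum_comm]
  refine Finset.sum_congr rfl fun ω _ => ?_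
  by_cases hQ : Q ω <;> simp [Set.indicator_apply, hQ]

theorem sub_le_mul_log_div {x y : ℝ} (hx : 0 ≤ x) (hy : 0 ≤ y) (hxy : 0 < x → 0 < y) :
    x - y ≤ x * Real.log (x / y) := by
  rcases hx.eq_or_lt with rfl | hx
  · simpa using hy
  have hy := hxy hx
  have h := Real.one_sub_inv_le_log_of_pos (div_pos hx hy)
  calc x - y = x * (1 - (x / y)⁻¹) := by field_simp
    _ ≤ _ := by gcongr

theorem eq_of_mul_log_div_eq_sub {x y : ℝ} (hx : 0 ≤ x) (hxy : 0 < x → 0 < y)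
    (h : x * Real.log (x / y) = x - y) : x = y := by
  rcases hx.eq_or_lt with rfl | hx
  · simp at h
    exact h.symm
  have hy := hxy hx
  by_contra hne
  have h1 : y / x ≠ 1 := by
    rw [Ne, div_eq_one_iff_eq hx.ne']
    exact fun h => hne h.symm
  have h2 := Real.log_lt_sub_one_of_pos (div_pos hy hx) h1
  rw [← inv_div, Real.log_inv] at h
  have h3 := mul_lt_mul_of_pos_left h2 hx
  have h4 : x * (y / x - 1) = y - x := by field_simp
  linarith

/-- The law that `(A, B, C)` would have if `A` and `B` were conditionally independent given `C`. -/
noncomputable def condProd (p : Ω → ℝ) (A : Ω → α) (B : Ω → β) (C : Ω → γ)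
    (a : α) (b : β) (c : γ) : ℝ :=
  pr p {ω | A ω = a ∧ C ω = c} * pr p {ω | B ω = b ∧ C ω = c} / pr p {ω | C ω = c}

theorem condProd_nonneg (hp : ∀ ω, 0 < p ω) (A : Ω → α) (B : Ω → β) (C : Ω → γ)
    (a : α) (b : β) (c : γ) : 0 ≤ condProd p A B C a b c :=
  div_nonneg (mul_nonneg (pr_nonneg hp _) (pr_nonneg hp _)) (pr_nonneg hp _)

theorem condProd_pos (hp : ∀ ω, 0 < p ω) (A : Ω → α) (B : Ω → β) (C : Ω → γ)
    (a : α) (b : β) (c : γ) (h : 0 < pr p {ω | A ω = a ∧ B ω = b ∧ C ω = c}) :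
    0 < condProd p A B C a b c :=
  div_pos
    (mul_pos (h.trans_le (pr_mono hp fun _ hω => ⟨hω.1, hω.2.2⟩))
      (h.trans_le (pr_mono hp fun _ hω => hω.2)))
    (h.trans_le (pr_mono hp fun _ hω => hω.2.2))

theorem condIndep_of_eq_condProd (hp : ∀ ω, 0 < p ω) {A : Ω → α} {B : Ω → β} {C : Ω → γ}
    (h : ∀ a b c, pr p {ω | A ω = a ∧ B ω = b ∧ C ω = c} = condProd p A B C a b c) :
    CondIndep p A B C := by
  intro a b c
  rw [h, condProd]
  rcases (pr_nonneg hp {ω | C ω = c}).eq_or_lt with h0 | h0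
  · have h1 : pr p {ω | A ω = a ∧ C ω = c} = 0 :=
      le_antisymm ((pr_mono hp fun _ hω => hω.2).trans h0.ge) (pr_nonneg hp _)
    simp [h1]
  · field_simp

theorem sum_sub_condProd [Fintype β] (hp : ∀ ω, 0 < p ω)
    (A : Ω → α) (B : Ω → β) (C : Ω → γ) (a : α) (c : γ) :
    ∑ b, (pr p {ω | A ω = a ∧ B ω = b ∧ C ω = c} - condProd p A B C a b c) = 0 := by
  have hP : ∑ b, pr p {ω | A ω = a ∧ B ω = b ∧ C ω = c} = pr p {ω | A ω = a ∧ C ω = c} := by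
    rw [← sum_pr_and B]
    simp only [and_left_comm]
  unfold condProd
  rw [Finset.sum_sub_distrib, hP, ← Finset.sum_div, ← Finset.mul_sum, sum_pr_and B]
  rcases (pr_nonneg hp {ω | C ω = c}).eq_or_lt with h0 | h0
  · have h1 : pr p {ω | A ω = a ∧ C ω = c} = 0 :=
      le_antisymm ((pr_mono hp fun _ hω => hω.2).trans h0.ge) (pr_nonneg hp _)
    simp [h1]
  · field_simp
    simp

theorem cmi_term_nonneg (hp : ∀ ω, 0 < p ω) (A : Ω → α) (B : Ω → β) (C : Ω → γ)
    (a : α) (b : β) (c : γ) :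
    0 ≤ pr p {ω | A ω = a ∧ B ω = b ∧ C ω = c} *
          Real.log (pr p {ω | A ω = a ∧ B ω = b ∧ C ω = c} / condProd p A B C a b c) -
        (pr p {ω | A ω = a ∧ B ω = b ∧ C ω = c} - condProd p A B C a b c) :=
  sub_nonneg.2 (sub_le_mul_log_div (pr_nonneg hp _) (condProd_nonneg hp A B C a b c)
    (condProd_pos hp A B C a b c))

/-- The conditional probability of `B = b` given the class of `ω` under `R`. -/
noncomputable def condPr (p : Ω → ℝ) (R : Ω → Ω → Prop) (B : Ω → β) (b : β) (ω : Ω) : ℝ :=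
  pr p {ω' | B ω' = b ∧ R ω ω'} / pr p {ω' | R ω ω'}

variable [Fintype α] [Fintype β] [Fintype γ]

/-- Conditional mutual information as a sum of nonnegative terms. -/
theorem cmi_eq_sum_sub (hp : ∀ ω, 0 < p ω) (A : Ω → α) (B : Ω → β) (C : Ω → γ) :
    cmi p A B C = ∑ a, ∑ b, ∑ c,
      (pr p {ω | A ω = a ∧ B ω = b ∧ C ω = c} *
          Real.log (pr p {ω | A ω = a ∧ B ω = b ∧ C ω = c} / condProd p A B C a b c) -
        (pr p {ω | A ω = a ∧ B ω = b ∧ C ω = c} - condProd p A B C a b c)) := by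
  have h0 : ∑ a, ∑ b, ∑ c,
      (pr p {ω | A ω = a ∧ B ω = b ∧ C ω = c} - condProd p A B C a b c) = 0 := by
    refine Finset.sum_eq_zero fun a _ => ?_
    rw [Finset.sum_comm]
    exact Finset.sum_eq_zero fun c _ => sum_sub_condProd hp A B C a c
  simp only [Finset.sum_sub_distrib] at h0 ⊢
  rw [h0, sub_zero]
  simp only [cmi, condProd, div_div_eq_mul_div]

theorem cmi_nonneg (hp : ∀ ω, 0 < p ω) (A : Ω → α) (B : Ω → β) (C : Ω → γ) :
    0 ≤ cmi p A B C := by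
  rw [cmi_eq_sum_sub hp]
  exact Finset.sum_nonneg fun a _ => Finset.sum_nonneg fun b _ => Finset.sum_nonneg fun c _ =>
    cmi_term_nonneg hp A B C a b c

theorem cmi_eq_zero_iff_condIndep (hp : ∀ ω, 0 < p ω) (A : Ω → α) (B : Ω → β) (C : Ω → γ) :
    cmi p A B C = 0 ↔ CondIndep p A B C := by
  constructor
  · intro h
    rw [cmi_eq_sum_sub hp] at h
    refine condIndep_of_eq_condProd hp fun a b c => ?_
    have hnn := cmi_term_nonneg hp A B C
    have ha := (Finset.sum_eq_zero_iff_of_nonneg fun a _ => Finset.sum_nonneg fun b _ =>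
      Finset.sum_nonneg fun c _ => hnn a b c).1 h a (Finset.mem_univ a)
    have hb := (Finset.sum_eq_zero_iff_of_nonneg fun b _ =>
      Finset.sum_nonneg fun c _ => hnn a b c).1 ha b (Finset.mem_univ b)
    have hc := (Finset.sum_eq_zero_iff_of_nonneg fun c _ => hnn a b c).1 hb c (Finset.mem_univ c)
    exact eq_of_mul_log_div_eq_sub (pr_nonneg hp _) (condProd_pos hp A B C a b c)
      (sub_eq_zero.1 hc)
  · intro h
    refine Finset.sum_eq_zero fun a _ => Finset.sum_eq_zero fun b _ =>
      Finset.sum_eq_zero fun c _ => ?_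
    rw [h a b c]
    rcases eq_or_ne (pr p {ω | A ω = a ∧ C ω = c} * pr p {ω | B ω = b ∧ C ω = c}) 0 with h0 | h0
    · simp [h0]
    · simp [div_self h0]

/-- `A` and `B` are conditionally independent given `C` iff the conditional law of `B` given
`(A, C)` is a function of `C` only. -/
theorem cmi_eq_zero_iff_condPr (hp : ∀ ω, 0 < p ω) {A : Ω → α} {B : Ω → β} {C : Ω → γ}
    {R : Ω → Ω → Prop} (hR : ∀ ω ω', R ω ω' ↔ A ω' = A ω ∧ C ω' = C ω) :
    cmi p A B C = 0 ↔
      ∀ ω ω', C ω = C ω' → ∀ b, condPr p R B b ω = condPr p R B b ω' := by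
  rw [cmi_eq_zero_iff_condIndep hp]
  have hset : ∀ b ω, {ω' | B ω' = b ∧ R ω ω'} = {ω' | A ω' = A ω ∧ B ω' = b ∧ C ω' = C ω} := by
    intro b ω
    ext ω'
    simp only [Set.mem_ofPred_eq, hR, and_left_comm]
  have hset' : ∀ ω, {ω' | R ω ω'} = {ω' | A ω' = A ω ∧ C ω' = C ω} := fun ω => by
    simp only [hR]
  constructor
  · intro h
    have key : ∀ ω b, condPr p R B b ω =
        pr p {ω' | B ω' = b ∧ C ω' = C ω} / pr p {ω' | C ω' = C ω} := by
      intro ω b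
      rw [condPr, hset, hset', div_eq_div_iff, h, mul_comm]
      · exact (pr_pos hp (E := {ω' | A ω' = A ω ∧ C ω' = C ω}) (ω := ω) ⟨rfl, rfl⟩).ne'
      · exact (pr_pos hp (E := {ω' | C ω' = C ω}) (ω := ω) rfl).ne'
    intro ω ω' hC b
    rw [key, key, hC]
  · intro h a b c
    by_cases hc : ∃ ω, C ω = c
    · obtain ⟨ω, rfl⟩ := hc
      have key : ∀ a, pr p {ω' | A ω' = a ∧ B ω' = b ∧ C ω' = C ω} =
          condPr p R B b ω * pr p {ω' | A ω' = a ∧ C ω' = C ω} := by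
        intro a
        by_cases ha : ∃ ω', A ω' = a ∧ C ω' = C ω
        · obtain ⟨ω', rfl, hC⟩ := ha
          rw [h ω ω' hC.symm, condPr, hset, hset', ← hC, div_mul_cancel₀]
          exact (pr_pos hp (E := {ω'' | A ω'' = A ω' ∧ C ω'' = C ω'}) (ω := ω') ⟨rfl, rfl⟩).ne'
        · rw [pr_eq_zero_of_forall_notMem, pr_eq_zero_of_forall_notMem, mul_zero]
          · exact fun ω' hω => ha ⟨ω', hω⟩
          · exact fun ω' hω => ha ⟨ω', hω.1, hω.2.2⟩
      have hsum : pr p {ω' | B ω' = b ∧ C ω' = C ω} =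
          condPr p R B b ω * pr p {ω' | C ω' = C ω} := by
        rw [← sum_pr_and A, ← sum_pr_and A (fun ω' => C ω' = C ω), Finset.mul_sum]
        exact Finset.sum_congr rfl fun a _ => key a
      rw [key, hsum]
      ring
    · rw [pr_eq_zero_of_forall_notMem (E := {ω | C ω = c}) fun ω hω => hc ⟨ω, hω⟩,
        pr_eq_zero_of_forall_notMem (E := {ω | A ω = a ∧ C ω = c}) fun ω hω => hc ⟨ω, hω.2⟩]
      simp

end FiniteProbability

section Trajectories

variable {m n : ℕ} {𝒳 : Type}

theorem varTuple_eq_iff (S : Finset (Fin m × Fin n)) (ω ω' : Traj m n 𝒳) :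
    varTuple S ω = varTuple S ω' ↔ ∀ q ∈ S, ω q.1 q.2 = ω' q.1 q.2 := by
  simp only [funext_iff, varTuple]
  constructor
  · intro h q hq
    simpa [hq] using h q.1 q.2
  · intro h k t
    split_ifs with hkt
    · rw [h _ hkt]
    · rfl

theorem past_eq_iff (S : Finset (Fin m)) (j : Fin n) (ω ω' : Traj m n 𝒳) :
    past S j ω = past S j ω' ↔ ∀ k ∈ S, ∀ t < j, ω k t = ω' k t := by
  simp only [funext_iff, past]
  constructor
  · intro h k hk t ht
    simpa [hk, ht] using h k t
  · intro h k t
    split_ifs with hkt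
    · rw [h k hkt.1 t hkt.2]
    · rfl

/-- Two trajectories agree at all times strictly before `j`. -/
def AgreeBefore (j : Fin n) (ω ω' : Traj m n 𝒳) : Prop :=
  ∀ k, ∀ t < j, ω' k t = ω k t

variable [Fintype 𝒳] [DecidableEq 𝒳] {p : Traj m n 𝒳 → ℝ}

theorem goodSet_iff (hp : ∀ ω, 0 < p ω) (i : Fin m) (j : Fin n) (S : Finset (Fin m × Fin n)) :
    GoodSet p i j S ↔ (∀ q ∈ S, q.2 < j) ∧
      ∀ ω ω' : Traj m n 𝒳, (∀ q ∈ S, ω q.1 q.2 = ω' q.1 q.2) →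
        ∀ b, condPr p (AgreeBefore j) (fun ω => ω i j) b ω =
          condPr p (AgreeBefore j) (fun ω => ω i j) b ω' := by
  refine and_congr_right fun hS => ?_
  rw [cmi_eq_zero_iff_condPr hp (R := AgreeBefore j)]
  · simp only [varTuple_eq_iff]
  · intro ω ω'
    simp only [varTuple_eq_iff, Finset.mem_sdiff, Finset.mem_filter, Finset.mem_univ, true_and]
    refine ⟨fun h => ⟨fun q hq => h _ _ hq.1, fun q hq => h _ _ (hS q hq)⟩, fun h k t ht => ?_⟩
    by_cases hkt : (k, t) ∈ S
    · exact h.2 _ hkt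
    · exact h.1 (k, t) ⟨ht, hkt⟩

theorem goodSet_inter (hp : ∀ ω, 0 < p ω) {i : Fin m} {j : Fin n}
    {S T : Finset (Fin m × Fin n)} (hS : GoodSet p i j S) (hT : GoodSet p i j T) :
    GoodSet p i j (S ∩ T) := by
  rw [goodSet_iff hp] at *
  refine ⟨fun q hq => hS.1 q (Finset.mem_inter.1 hq).1, fun ω ω' h b => ?_⟩
  rw [hS.2 ω (fun k t => if (k, t) ∈ S then ω k t else ω' k t) fun q hq => (if_pos hq).symm]
  refine hT.2 _ _ (fun q hq => ?_) b
  split_ifs with hqS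
  · exact h q (Finset.mem_inter.2 ⟨hqS, hq⟩)
  · rfl

/-- The full past of the processes in a causal Markov blanket, together with that of `X_i`
itself, screens `X_{i,j}` off from all other earlier variables. -/
theorem goodSet_of_isCausalBlanket (hp : ∀ ω, 0 < p ω) {i : Fin m} {A : Finset (Fin m)}
    (hA : IsCausalBlanket p i A) (j : Fin n) :
    GoodSet p i j
      (Finset.univ.filter fun q : Fin m × Fin n => q.1 ∈ insert i A ∧ q.2 < j) := by
  have h := (Finset.sum_eq_zero_iff_of_nonneg fun j _ => cmi_nonneg hp _ _ _).1 hA.2 j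
    (Finset.mem_univ j)
  rw [cmi_eq_zero_iff_condPr hp (R := AgreeBefore j)] at h
  · rw [goodSet_iff hp]
    refine ⟨fun q hq => (Finset.mem_filter.1 hq).2.2, fun ω ω' hω => h ω ω' ?_⟩
    simp only [Finset.mem_filter, Finset.mem_univ, true_and, Finset.mem_insert] at hω
    simp only [Prod.mk.injEq, past_eq_iff, Finset.mem_singleton]
    exact ⟨fun k hk t ht => hω (k, t) ⟨Or.inl hk, ht⟩, fun k hk t ht => hω (k, t) ⟨Or.inr hk, ht⟩⟩
  · intro ω ω'
    simp only [Prod.mk.injEq, past_eq_iff, Finset.mem_singleton, Finset.mem_sdiff,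
      Finset.mem_erase, Finset.mem_univ, and_true]
    refine ⟨fun h => ⟨fun k _ => h k, fun k _ => h k, fun k _ => h k⟩, fun h k => ?_⟩
    by_cases hki : k = i
    · exact h.2.1 k hki
    by_cases hkA : k ∈ A
    · exact h.2.2 k hkA
    · exact h.1 k ⟨hki, hkA⟩

/-- A minimum-cardinality screening set is contained in every screening set. -/
theorem subset_of_goodSet_of_card_le (hp : ∀ ω, 0 < p ω) {i : Fin m} {j : Fin n}
    {S T : Finset (Fin m × Fin n)} (hS : GoodSet p i j S)
    (hmin : ∀ S' : Finset (Fin m × Fin n), GoodSet p i j S' → S.card ≤ S'.card)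
    (hT : GoodSet p i j T) : S ⊆ T :=
  Finset.inter_eq_left.1
    (Finset.eq_of_subset_of_card_le Finset.inter_subset_left (hmin _ (goodSet_inter hp hS hT)))

end Trajectories

/-- Under Assumption 1, fix `i` and a time `j ≥ 2` (i.e. with a nonempty
past). Among the subsets `S` of the variables strictly before time `j` rendering `X_{i,j}`
conditionally independent of the remaining earlier variables given `S`, there is a unique
one of minimum cardinality, and it is contained in
`{ X_{l,τ} : l ∈ A(i) ∪ {i}, τ < j }`, where `A(i)` is the causal Markov boundary of `X_i`. -/
theorem stmt_14 {m n : ℕ} (hm : 2 ≤ m) (hn : 1 ≤ n)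
    {𝒳 : Type} [Fintype 𝒳] [DecidableEq 𝒳] [Nonempty 𝒳]
    (p : Traj m n 𝒳 → ℝ) (hp : Assumption1 p)
    (i : Fin m) (j : Fin n) (hj : 0 < (j : ℕ))
    (A : Finset (Fin m)) (hA : IsCausalBoundary p i A) :
    (∃! S : Finset (Fin m × Fin n),
      GoodSet p i j S ∧
        ∀ S' : Finset (Fin m × Fin n), GoodSet p i j S' → S.card ≤ S'.card) ∧
    (∀ S : Finset (Fin m × Fin n),
      (GoodSet p i j S ∧
        ∀ S' : Finset (Fin m × Fin n), GoodSet p i j S' → S.card ≤ S'.card) →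
      S ⊆ Finset.univ.filter fun q : Fin m × Fin n => q.1 ∈ insert i A ∧ q.2 < j) := by
  have hpos := hp.1
  have hgood := goodSet_of_isCausalBlanket hpos hA.1 j
  refine ⟨?_, fun S hS => subset_of_goodSet_of_card_le hpos hS.1 hS.2 hgood⟩
  obtain ⟨S, hS, hmin⟩ := Set.exists_min_image {S | GoodSet p i j S} Finset.card
    (Set.toFinite _) ⟨_, hgood⟩
  exact ⟨S, ⟨hS, hmin⟩, fun T hT =>
    (subset_of_goodSet_of_card_le hpos hT.1 hT.2 hS).antisymm
      (subset_of_goodSet_of_card_le hpos hS hmin hT.1)⟩
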